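/- In U/I_RKst, the noncommutative homogeneous symmetric functions h_d(u) lie in the subalgebra generated by e_1(u), e_2(u), ..., and pairwise commute; specifically h_d(u) = det(e_{1+j−i}(u))_{1≤i,j≤d} computed via the Jacobi-Trudi expansion (i.e., h_d(u) is the image of h_d(x) under the homomorphism Λ(x) → U/I_RKst sending e_k(x) to e_k(u)). -/

import Mathlib

open scoped Classical

noncomputable section

/-- The monomial (word) in the free associative algebra `U = ℤ⟨u_1, …, u_N⟩`. -/
def word (N : ℕ) (l : List (Fin N)) : FreeAlgebra ℤ (Fin N) :=
  (l.map (FreeAlgebra.ι ℤ)).prod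

/-- The generating relations of the two-sided ideal `I_RKst`. -/
inductive RKRel (N : ℕ) : FreeAlgebra ℤ (Fin N) → FreeAlgebra ℤ (Fin N) → Prop
  | knuth_rotation (a b c : Fin N) (hab : a < b) (hbc : b < c) :
      RKRel N
        (FreeAlgebra.ι ℤ b *
            (FreeAlgebra.ι ℤ a * FreeAlgebra.ι ℤ c - FreeAlgebra.ι ℤ c * FreeAlgebra.ι ℤ a) -
          (FreeAlgebra.ι ℤ a * FreeAlgebra.ι ℤ c - FreeAlgebra.ι ℤ c * FreeAlgebra.ι ℤ a) *
            FreeAlgebra.ι ℤ b)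
        0
  | repeated (l : List (Fin N)) (h : ¬ l.Nodup) : RKRel N (word N l) 0

/-- The noncommutative elementary symmetric function `e_d(u)`. -/
def esym (N d : ℕ) : FreeAlgebra ℤ (Fin N) :=
  ∑ f : Fin d → Fin N, if StrictAnti f then word N (List.ofFn f) else 0

/-- `e_d(u)` with integer index: `e_d(u) = 0` for `d < 0`. -/
def esymZ (N : ℕ) (d : ℤ) : FreeAlgebra ℤ (Fin N) :=
  if 0 ≤ d then esym N d.toNat else 0

/-- The noncommutative homogeneous symmetric function `h_d(u)`. -/
def hsym (N d : ℕ) : FreeAlgebra ℤ (Fin N) :=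
  ∑ f : Fin d → Fin N, if Monotone f then word N (List.ofFn f) else 0

/-- The canonical projection `U → U/I_RKst`. -/
def pr (N : ℕ) : FreeAlgebra ℤ (Fin N) →ₐ[ℤ] RingQuot (RKRel N) :=
  RingQuot.mkAlgHom ℤ (RKRel N)

/-!
Write `E(t) = ∑ e_d t^d` and `H(-t) = ∑ (-1)^d h_d t^d`. In any ring `E(t)` is the ordered product
of the factors `1 + u_a t`, which cancel those of `H(-t)` one letter at a time, so `E(t) H(-t) = 1`;
hence the `h_d` are integer polynomials in the `e_k`.

The rotation relations give `[e_{d+1}, u_c] = [e_1, u_c] e_d` for the `e_k` in letters smaller than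
`c`. Splitting off the largest letter, this makes the `e_k` commute by induction on the alphabet,
and then so do the `h_d`.

Over the commutative ring generated by the `e_k`, the Toeplitz matrices of `E(t)` and `H(-t)` are
inverse to each other, and Cramer's rule for the corner entry is the Jacobi-Trudi identity.
-/

open PowerSeries Finset

section WordSum

variable {ι A : Type*} [Semiring A]

/-- The sum of the monomials `u a₁ ⋯ u a_d` over the words `a₁ … a_d` with letters in `s` such that
`r aᵢ aⱼ` for all `i < j`. The relation `(· > ·)` gives the noncommutative elementary symmetric
functions, and `(· ≤ ·)` the homogeneous ones. -/
def wordSum (r : ι → ι → Prop) (u : ι → A) (s : Finset ι) (d : ℕ) : A :=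
  ∑ f ∈ Fintype.piFinset fun _ : Fin d ↦ s with (List.ofFn f).Pairwise r,
    ((List.ofFn f).map u).prod

variable (r : ι → ι → Prop) (u : ι → A) (s : Finset ι) (d : ℕ)

@[simp]
lemma wordSum_zero : wordSum r u s 0 = 1 := by
  simp [wordSum]

lemma wordSum_succ [DecidableRel r] :
    wordSum r u s (d + 1) = ∑ a ∈ s, u a * wordSum r u {b ∈ s | r a b} d := by
  simp only [wordSum, mul_sum, sum_sigma']
  refine sum_nbij' (fun f ↦ ⟨f 0, Fin.tail f⟩) (fun p ↦ Fin.cons p.1 p.2) ?_ ?_ ?_ ?_ ?_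
  · intro f hf
    simp_all [Fin.forall_fin_succ, Fin.tail]
  · intro p hp
    simp_all [Fin.forall_fin_succ]
  · simp
  · simp
  · intro f _
    simp [Fin.tail_def, Function.comp_def]

lemma wordSum_empty_succ : wordSum r u ∅ (d + 1) = 0 := by
  classical simp [wordSum_succ]

lemma wordSum_one : wordSum r u s 1 = ∑ a ∈ s, u a := by
  classical simp [wordSum_succ]

variable {r s} in
lemma wordSum_insert_succ [DecidableEq ι] [DecidableRel r] {a : ι} (has : a ∉ s)
    (hr : ∀ b ∈ s, ¬ r b a) :
    wordSum r u (insert a s) (d + 1) =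
      u a * wordSum r u {b ∈ insert a s | r a b} d + wordSum r u s (d + 1) := by
  rw [wordSum_succ, wordSum_succ, sum_insert has]
  congr 1
  refine sum_congr rfl fun b hb ↦ ?_
  rw [filter_insert, if_neg (hr b hb)]

end WordSum

section GeneratingFunctions

variable {ι A : Type*} [LinearOrder ι]

section Semiring

variable [Semiring A] (u : ι → A)

lemma wordSum_gt_insert_succ {a : ι} {s : Finset ι} (ha : ∀ b ∈ s, b < a) (d : ℕ) :
    wordSum (· > ·) u (insert a s) (d + 1) =
      u a * wordSum (· > ·) u s d + wordSum (· > ·) u s (d + 1) := by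
  have has : a ∉ s := fun h ↦ lt_irrefl a (ha a h)
  rw [wordSum_insert_succ u d has fun b hb ↦ (ha b hb).not_gt, filter_insert,
    if_neg (lt_irrefl a), filter_true_of_mem ha]

lemma wordSum_le_insert_succ {a : ι} {s : Finset ι} (ha : ∀ b ∈ s, a < b) (d : ℕ) :
    wordSum (· ≤ ·) u (insert a s) (d + 1) =
      u a * wordSum (· ≤ ·) u (insert a s) d + wordSum (· ≤ ·) u s (d + 1) := by
  have has : a ∉ s := fun h ↦ lt_irrefl a (ha a h)
  rw [wordSum_insert_succ u d has fun b hb ↦ (ha b hb).not_ge, filter_true_of_mem]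
  simpa using fun b hb ↦ (ha b hb).le

/-- The generating function `E(t) = ∑ e_d(u) t^d` of the elementary symmetric functions in the
letters `s`. -/
def elemSeries (s : Finset ι) : A⟦X⟧ :=
  .mk (wordSum (· > ·) u s)

lemma elemSeries_empty : elemSeries u ∅ = 1 := by
  ext (_ | d) <;> simp [elemSeries, wordSum_empty_succ, coeff_one]

lemma elemSeries_insert {a : ι} {s : Finset ι} (ha : ∀ b ∈ s, b < a) :
    elemSeries u (insert a s) = (1 + C (u a) * X) * elemSeries u s := by
  ext (_ | d) <;>
    simp [elemSeries, add_mul, mul_assoc, coeff_succ_X_mul, wordSum_gt_insert_succ u ha, add_comm]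

end Semiring

variable [Ring A] (u : ι → A)

/-- The generating function `H(-t) = ∑ (-1)^d h_d(u) t^d` of the homogeneous symmetric functions in
the letters `s`; the signs make it the inverse of `elemSeries u s`. -/
def altHomogSeries (s : Finset ι) : A⟦X⟧ :=
  .mk fun d ↦ (-1) ^ d * wordSum (· ≤ ·) u s d

lemma altHomogSeries_empty : altHomogSeries u ∅ = 1 := by
  ext (_ | d) <;> simp [altHomogSeries, wordSum_empty_succ, coeff_one]

lemma mul_altHomogSeries_insert {a : ι} {s : Finset ι} (ha : ∀ b ∈ s, a < b) :
    (1 + C (u a) * X) * altHomogSeries u (insert a s) = altHomogSeries u s := by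
  ext (_ | d)
  · simp [altHomogSeries, add_mul, mul_assoc]
  · have hsign : u a * (-1) ^ d = (-1) ^ d * u a := (Commute.neg_one_right (u a)).pow_right d
    simp only [altHomogSeries, add_mul, one_mul, mul_assoc, map_add, coeff_C_mul, coeff_succ_X_mul,
      coeff_mk, wordSum_le_insert_succ u ha]
    rw [← mul_assoc (u a), hsign, pow_succ]
    noncomm_ring

-- The largest letter of `s` is the leftmost factor of `E` on `s`, where it cancels the smallest
-- letter of `insert a t` in `H`, so it moves into `t` in the induction.
lemma elemSeries_mul_altHomogSeries_union {s t : Finset ι} (hst : ∀ a ∈ s, ∀ b ∈ t, a < b) :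
    elemSeries u s * altHomogSeries u (s ∪ t) = altHomogSeries u t := by
  induction s using Finset.induction_on_max generalizing t with
  | empty => simp [elemSeries_empty]
  | insert a s ha ih =>
    have hat : ∀ b ∈ t, a < b := hst a (mem_insert_self a s)
    have hs : ∀ c ∈ s, ∀ b ∈ insert a t, c < b := by
      simp only [mem_insert, forall_eq_or_imp]
      exact fun c hc ↦ ⟨ha c hc, fun b hb ↦ (ha c hc).trans (hat b hb)⟩
    rw [elemSeries_insert u ha, insert_union, ← union_insert, mul_assoc, ih hs,
      mul_altHomogSeries_insert u hat]

theorem elemSeries_mul_altHomogSeries (s : Finset ι) :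
    elemSeries u s * altHomogSeries u s = 1 := by
  simpa [altHomogSeries_empty] using
    elemSeries_mul_altHomogSeries_union u (s := s) (t := ∅) (by simp)

end GeneratingFunctions

section Relations

variable {ι A : Type*} [LinearOrder ι] [Ring A] {u : ι → A}

/-- The family `u` satisfies the defining relations of the ideal `I_RKst`, so that the evaluation of
noncommutative polynomials at `u` factors through `U/I_RKst`. -/
structure IsRKFamily (u : ι → A) : Prop where
  commute_lie : ∀ ⦃a b c : ι⦄, a < b → b < c → Commute (u b) ⁅u a, u c⁆
  prod_eq_zero : ∀ l : List ι, ¬ l.Nodup → (l.map u).prod = 0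

namespace IsRKFamily

lemma prod_mul_wordSum_mul_eq_zero (hu : IsRKFamily u) (r : ι → ι → Prop) (s : Finset ι) (d : ℕ)
    {l : List ι} {a : ι} (ha : a ∈ l) : (l.map u).prod * wordSum r u s d * u a = 0 := by
  induction d generalizing l s with
  | zero =>
    have hl : ¬ (l ++ [a]).Nodup := by simp [List.nodup_append, ha]
    simpa using hu.prod_eq_zero _ hl
  | succ d ih =>
    classical
    rw [wordSum_succ, mul_sum, sum_mul]
    refine sum_eq_zero fun b _ ↦ ?_
    simpa [mul_assoc] using ih {c ∈ s | r b c} (l := l ++ [b]) (by simp [ha])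

lemma mul_wordSum_mul_self (hu : IsRKFamily u) (r : ι → ι → Prop) (s : Finset ι) (d : ℕ) (a : ι) :
    u a * wordSum r u s d * u a = 0 := by
  simpa using hu.prod_mul_wordSum_mul_eq_zero r s d (l := [a]) (by simp)

lemma mul_mul_self (hu : IsRKFamily u) (a b : ι) : u a * u b * u a = 0 := by
  simpa [mul_assoc] using hu.prod_eq_zero [a, b, a] (by simp)

lemma mul_self (hu : IsRKFamily u) (a : ι) : u a * u a = 0 := by
  simpa using hu.prod_eq_zero [a, a] (by simp)

lemma commute_lie_sum (hu : IsRKFamily u) {s : Finset ι} {b c : ι} (hs : ∀ a ∈ s, a < b)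
    (hbc : b < c) : Commute (u b) ⁅∑ a ∈ s, u a, u c⁆ := by
  rw [Ring.lie_def, sum_mul, mul_sum, ← sum_sub_distrib]
  exact .sum_right _ _ _ fun a ha ↦ hu.commute_lie (hs a ha) hbc

lemma lie_wordSum_succ (hu : IsRKFamily u) {s : Finset ι} {c : ι} (hs : ∀ a ∈ s, a < c) (d : ℕ) :
    ⁅wordSum (· > ·) u s (d + 1), u c⁆ = ⁅∑ a ∈ s, u a, u c⁆ * wordSum (· > ·) u s d := by
  induction s using Finset.induction_on_max generalizing d with
  | empty => simp [wordSum_empty_succ, Ring.lie_def]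
  | insert a s ha ih =>
    have hac : a < c := hs a (mem_insert_self a s)
    have ih' := fun k ↦ ih (fun b hb ↦ hs b (mem_insert_of_mem hb)) k
    have has : a ∉ s := fun h ↦ lt_irrefl a (ha a h)
    rcases d with _ | d
    · simp [wordSum_one]
    have hcomm : u a * ⁅∑ b ∈ s, u b, u c⁆ = ⁅∑ b ∈ s, u b, u c⁆ * u a :=
      hu.commute_lie_sum ha hac
    have hvanish : ⁅u a, u c⁆ * u a = 0 := by
      rw [Ring.lie_def, sub_mul, hu.mul_mul_self, mul_assoc, hu.mul_self, mul_zero, sub_zero]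
    rw [wordSum_gt_insert_succ u ha, wordSum_gt_insert_succ u ha, sum_insert has]
    set p := ∑ b ∈ s, u b
    set e := wordSum (· > ·) u s
    calc ⁅u a * e (d + 1) + e (d + 2), u c⁆
      _ = u a * ⁅e (d + 1), u c⁆ + ⁅u a, u c⁆ * e (d + 1) + ⁅e (d + 2), u c⁆ := by
        simp only [Ring.lie_def]; noncomm_ring
      _ = ⁅p, u c⁆ * u a * e d + ⁅u a, u c⁆ * e (d + 1) + ⁅p, u c⁆ * e (d + 1) := by
        rw [ih' d, ih' (d + 1), ← mul_assoc, hcomm]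
      _ = ⁅u a, u c⁆ * u a * e d + ⁅p, u c⁆ * u a * e d + ⁅u a, u c⁆ * e (d + 1) +
          ⁅p, u c⁆ * e (d + 1) := by rw [hvanish, zero_mul, zero_add]
      _ = ⁅u a + p, u c⁆ * (u a * e d + e (d + 1)) := by
        simp only [Ring.lie_def]; noncomm_ring

-- With the largest letter `a` split off, every term below is symmetric in the two degrees once the
-- functions in the smaller letters commute.
lemma wordSum_insert_mul_wordSum_insert (hu : IsRKFamily u) {a : ι} {s : Finset ι}
    (ha : ∀ b ∈ s, b < a) (j k : ℕ) :
    wordSum (· > ·) u (insert a s) (j + 1) * wordSum (· > ·) u (insert a s) (k + 1) =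
      wordSum (· > ·) u s (j + 1) * wordSum (· > ·) u s (k + 1) +
      u a * (wordSum (· > ·) u s j * wordSum (· > ·) u s (k + 1) +
        wordSum (· > ·) u s (j + 1) * wordSum (· > ·) u s k) +
      ⁅∑ b ∈ s, u b, u a⁆ * (wordSum (· > ·) u s j * wordSum (· > ·) u s k) := by
  have hlie := hu.lie_wordSum_succ ha j
  have hvanish := hu.mul_wordSum_mul_self (· > ·) s j a
  rw [wordSum_gt_insert_succ u ha, wordSum_gt_insert_succ u ha, ← mul_assoc ⁅_, _⁆, ← hlie]
  set e := wordSum (· > ·) u s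
  calc (u a * e j + e (j + 1)) * (u a * e k + e (k + 1))
    _ = u a * e j * u a * e k + e (j + 1) * e (k + 1) +
        u a * (e j * e (k + 1) + e (j + 1) * e k) + ⁅e (j + 1), u a⁆ * e k := by
      rw [Ring.lie_def]; noncomm_ring
    _ = _ := by rw [hvanish, zero_mul, zero_add]

theorem commute_wordSum (hu : IsRKFamily u) (s : Finset ι) (j k : ℕ) :
    Commute (wordSum (· > ·) u s j) (wordSum (· > ·) u s k) := by
  induction s using Finset.induction_on_max generalizing j k with
  | empty => cases j <;> cases k <;> simp [wordSum_empty_succ]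
  | insert a s ha ih =>
    rcases j with _ | j
    · simp
    rcases k with _ | k
    · simp
    rw [commute_iff_eq, hu.wordSum_insert_mul_wordSum_insert ha,
      hu.wordSum_insert_mul_wordSum_insert ha, (ih (j + 1) (k + 1)).eq, (ih j (k + 1)).eq,
      (ih (j + 1) k).eq, (ih j k).eq, add_comm (_ * wordSum _ u s j)]

end IsRKFamily

end Relations

section Toeplitz

/-- The upper triangular Toeplitz matrix whose `k`-th superdiagonal carries the coefficient of
`X ^ k` in `f`; it turns products of power series into products of matrices. -/
def toeplitz {R : Type*} [Semiring R] (n : ℕ) (f : R⟦X⟧) : Matrix (Fin n) (Fin n) R :=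
  .of fun i j ↦ if (i : ℕ) ≤ j then coeff (j - i : ℕ) f else 0

lemma toeplitz_one {R : Type*} [Semiring R] (n : ℕ) : toeplitz n (1 : R⟦X⟧) = 1 := by
  ext i j
  simp only [toeplitz, Matrix.of_apply, Matrix.one_apply, coeff_one, ← ite_and]
  exact if_congr (by omega) rfl rfl

lemma toeplitz_mul {R : Type*} [Semiring R] (n : ℕ) (f g : R⟦X⟧) :
    toeplitz n (f * g) = toeplitz n f * toeplitz n g := by
  ext i k
  simp only [toeplitz, Matrix.mul_apply, Matrix.of_apply, ite_zero_mul_ite_zero, ← sum_filter]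
  split_ifs with hik
  · rw [coeff_mul]
    symm
    refine sum_nbij (fun j ↦ (j - i, k - j)) ?_ ?_ ?_ fun _ _ ↦ rfl
    · intro j hj
      simp only [mem_filter, mem_univ, true_and, HasAntidiagonal.mem_antidiagonal] at hj ⊢
      omega
    · intro j hj j' hj' h
      simp only [mem_coe, mem_filter, mem_univ, true_and, Prod.mk.injEq] at hj hj' h
      omega
    · rintro ⟨p, q⟩ hpq
      rw [mem_coe, HasAntidiagonal.mem_antidiagonal] at hpq
      refine ⟨⟨i + p, by omega⟩, ?_, ?_⟩
      · simp only [mem_coe, mem_filter, mem_univ, true_and]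
        omega
      · simp only [Prod.mk.injEq]
        omega
  · refine (sum_eq_zero fun j hj ↦ absurd ?_ hik).symm
    exact (mem_filter.mp hj).2.1.trans (mem_filter.mp hj).2.2

variable {R : Type*} [CommRing R]

lemma det_toeplitz (n : ℕ) (f : R⟦X⟧) : (toeplitz n f).det = constantCoeff f ^ n := by
  rw [Matrix.det_of_isUpperTriangular]
  · simp [toeplitz]
  · intro i j hij
    exact if_neg (not_le.mpr hij)

lemma adjugate_toeplitz_of_mul_eq_one {f g : R⟦X⟧} (hfg : f * g = 1) (n : ℕ) :
    (toeplitz n f).adjugate = constantCoeff f ^ n • toeplitz n g := by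
  calc (toeplitz n f).adjugate
    _ = (toeplitz n f).adjugate * (toeplitz n f * toeplitz n g) := by
      rw [← toeplitz_mul, hfg, toeplitz_one, mul_one]
    _ = constantCoeff f ^ n • toeplitz n g := by
      rw [← mul_assoc, Matrix.adjugate_mul, det_toeplitz, smul_one_mul]

-- The determinant is the minor of `toeplitz (d + 1) f` giving the top right entry of the adjugate.
theorem det_coeff_of_mul_eq_one {f g : R⟦X⟧} (hfg : f * g = 1) (d : ℕ) :
    (Matrix.of fun i j : Fin d ↦ if (i : ℕ) ≤ j + 1 then coeff (j + 1 - i : ℕ) f else 0).det =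
      (-1) ^ d * constantCoeff f ^ (d + 1) * coeff d g := by
  have hcorner := congr_fun₂ (adjugate_toeplitz_of_mul_eq_one hfg (d + 1)) 0 (Fin.last d)
  have hminor : (toeplitz (d + 1) f).submatrix (Fin.last d).succAbove (Fin.succAbove 0) =
      .of fun i j : Fin d ↦ if (i : ℕ) ≤ j + 1 then coeff (j + 1 - i : ℕ) f else 0 := by
    ext i j
    simp only [toeplitz, Matrix.submatrix_apply, Matrix.of_apply, Fin.succAbove_last,
      Fin.succAbove_zero, Fin.val_castSucc, Fin.val_succ]
  rw [Matrix.adjugate_fin_succ_eq_det_submatrix, hminor] at hcorner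
  have hsign : (-1 : R) ^ d * (-1) ^ d = 1 := by rw [← pow_add, Even.neg_one_pow ⟨d, rfl⟩]
  simp only [toeplitz, Matrix.smul_apply, Matrix.of_apply, Fin.val_zero, Fin.val_last, zero_le,
    if_true, tsub_zero, add_zero, smul_eq_mul] at hcorner
  rw [mul_assoc, ← hcorner, ← mul_assoc, hsign, one_mul]

end Toeplitz

section JacobiTrudi

lemma map_det_eq_sum_list_prod {R A : Type*} [CommRing R] [Ring A] (φ : R →+* A) {d : ℕ}
    (M : Matrix (Fin d) (Fin d) R) :
    φ M.det = ∑ σ : Equiv.Perm (Fin d), (σ.sign : ℤ) •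
      (List.ofFn fun i ↦ φ (M i (σ i))).prod := by
  rw [← Matrix.det_transpose, Matrix.det_apply, map_sum]
  refine sum_congr rfl fun σ _ ↦ ?_
  rw [Units.smul_def, map_zsmul, ← List.prod_ofFn, map_list_prod, List.map_ofFn]
  rfl

lemma map_invOfUnit_eq_of_map_mul_eq_one {R A : Type*} [Ring R] [Semiring A] (φ : R →+* A)
    {f : R⟦X⟧} {g : A⟦X⟧} (hf : constantCoeff f = 1) (hfg : PowerSeries.map φ f * g = 1) :
    PowerSeries.map φ (invOfUnit f 1) = g := by
  refine left_inv_eq_right_inv ?_ hfg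
  rw [← map_mul, invOfUnit_mul f 1 (by simpa using hf), map_one]

variable {ι A : Type*} [LinearOrder ι] [Ring A] (u : ι → A) (s : Finset ι)

/-- The subring of `A` generated by the elementary symmetric functions in the letters `s`. -/
abbrev elemSubalgebra : Subalgebra ℤ A :=
  Algebra.adjoin ℤ (Set.range (wordSum (· > ·) u s))

/-- The generating function `elemSeries u s`, with coefficients in `elemSubalgebra u s`. When the
elementary symmetric functions commute, this makes identities over commutative rings available. -/
def elemSeriesLift : (elemSubalgebra u s)⟦X⟧ :=
  .mk fun k ↦ ⟨wordSum (· > ·) u s k, Algebra.subset_adjoin ⟨k, rfl⟩⟩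

lemma constantCoeff_elemSeriesLift : constantCoeff (elemSeriesLift u s) = 1 := by
  ext
  simp [elemSeriesLift]

lemma map_elemSeriesLift :
    PowerSeries.map (elemSubalgebra u s).val.toRingHom (elemSeriesLift u s) = elemSeries u s :=
  rfl

lemma map_invOfUnit_elemSeriesLift :
    PowerSeries.map (elemSubalgebra u s).val.toRingHom (invOfUnit (elemSeriesLift u s) 1) =
      altHomogSeries u s := by
  apply map_invOfUnit_eq_of_map_mul_eq_one _ (constantCoeff_elemSeriesLift u s)
  rw [map_elemSeriesLift, elemSeries_mul_altHomogSeries]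

lemma wordSum_le_eq_coeff_invOfUnit (d : ℕ) :
    wordSum (· ≤ ·) u s d =
      ((-1) ^ d * coeff d (invOfUnit (elemSeriesLift u s) 1) : elemSubalgebra u s) := by
  have hcoeff : ((coeff d (invOfUnit (elemSeriesLift u s) 1) : elemSubalgebra u s) : A) =
      (-1) ^ d * wordSum (· ≤ ·) u s d := by
    simpa [altHomogSeries] using congr_arg (coeff d) (map_invOfUnit_elemSeriesLift u s)
  have hsign : (-1 : A) ^ d * (-1) ^ d = 1 := by rw [← pow_add, Even.neg_one_pow ⟨d, rfl⟩]
  simp [hcoeff, ← mul_assoc, hsign]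

theorem wordSum_le_mem_elemSubalgebra (d : ℕ) : wordSum (· ≤ ·) u s d ∈ elemSubalgebra u s := by
  rw [wordSum_le_eq_coeff_invOfUnit]
  exact SetLike.coe_mem _

variable {u} in
lemma IsRKFamily.isMulCommutative_elemSubalgebra (hu : IsRKFamily u) :
    IsMulCommutative (elemSubalgebra u s) := by
  refine Algebra.isMulCommutative_adjoin ℤ ?_
  rintro _ ⟨j, rfl⟩ _ ⟨k, rfl⟩
  exact hu.commute_wordSum s j k

open scoped IsMulCommutative in
variable {u} in
theorem IsRKFamily.wordSum_le_eq_det (hu : IsRKFamily u) (d : ℕ) :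
    wordSum (· ≤ ·) u s d = ∑ σ : Equiv.Perm (Fin d), (σ.sign : ℤ) •
      (List.ofFn fun i ↦
        if (i : ℕ) ≤ σ i + 1 then wordSum (· > ·) u s (σ i + 1 - i) else 0).prod := by
  have := hu.isMulCommutative_elemSubalgebra s
  have hf := constantCoeff_elemSeriesLift u s
  have hdet := det_coeff_of_mul_eq_one (mul_invOfUnit (elemSeriesLift u s) 1 hf) d
  rw [hf, one_pow, mul_one] at hdet
  rw [wordSum_le_eq_coeff_invOfUnit, ← hdet]
  refine (map_det_eq_sum_list_prod (elemSubalgebra u s).val.toRingHom _).trans ?_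
  simp [elemSeriesLift, apply_ite]

end JacobiTrudi

section Quotient

variable (N : ℕ)

lemma isRKFamily_pr_ι : IsRKFamily fun a ↦ pr N (FreeAlgebra.ι ℤ a) where
  commute_lie a b c hab hbc := by
    have h := RingQuot.mkAlgHom_rel ℤ (RKRel.knuth_rotation a b c hab hbc)
    simpa [sub_eq_zero, pr, commute_iff_eq, Ring.lie_def] using h
  prod_eq_zero l hl := by
    have h := RingQuot.mkAlgHom_rel ℤ (RKRel.repeated l hl)
    simpa [word, pr, map_list_prod, Function.comp_def] using h

lemma pr_esym (d : ℕ) :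
    pr N (esym N d) = wordSum (· > ·) (fun a ↦ pr N (FreeAlgebra.ι ℤ a)) univ d := by
  simp [esym, wordSum, word, sum_filter, StrictAnti, List.pairwise_ofFn, apply_ite,
    map_list_prod, Function.comp_def]

lemma pr_hsym (d : ℕ) :
    pr N (hsym N d) = wordSum (· ≤ ·) (fun a ↦ pr N (FreeAlgebra.ι ℤ a)) univ d := by
  simp [hsym, wordSum, word, sum_filter, monotone_iff_forall_lt, List.pairwise_ofFn, apply_ite,
    map_list_prod, Function.comp_def]

lemma pr_esymZ (i j : ℕ) :
    pr N (esymZ N (1 + (j : ℤ) - i)) =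
      if i ≤ j + 1 then wordSum (· > ·) (fun a ↦ pr N (FreeAlgebra.ι ℤ a)) univ (j + 1 - i)
      else 0 := by
  have hle : 0 ≤ 1 + (j : ℤ) - i ↔ i ≤ j + 1 := by omega
  have hnat : (1 + (j : ℤ) - i).toNat = j + 1 - i := by omega
  simp only [esymZ, hle, hnat, apply_ite (pr N), pr_esym, map_zero]

end Quotient

theorem hsym_mem_commute_jacobiTrudi_general {ι A : Type*} [LinearOrder ι] [Ring A] {u : ι → A}
    (hu : IsRKFamily u) (s : Finset ι) :
    (∀ d, wordSum (· ≤ ·) u s d ∈ Algebra.adjoin ℤ (Set.range (wordSum (· > ·) u s))) ∧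
    (∀ d e, wordSum (· ≤ ·) u s d * wordSum (· ≤ ·) u s e =
      wordSum (· ≤ ·) u s e * wordSum (· ≤ ·) u s d) ∧
    (∀ d, wordSum (· ≤ ·) u s d = ∑ σ : Equiv.Perm (Fin d), (σ.sign : ℤ) •
      (List.ofFn fun i ↦
        if (i : ℕ) ≤ σ i + 1 then wordSum (· > ·) u s (σ i + 1 - i) else 0).prod) := by
  refine ⟨wordSum_le_mem_elemSubalgebra u s, fun d e ↦ ?_, hu.wordSum_le_eq_det s⟩
  have := hu.isMulCommutative_elemSubalgebra s
  exact setLike_mul_comm (wordSum_le_mem_elemSubalgebra u s d) (wordSum_le_mem_elemSubalgebra u s e)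

/-- In `U/I_RKst`, the noncommutative homogeneous symmetric functions `h_d(u)` lie in the
subalgebra generated by `e_1(u), e_2(u), …`, pairwise commute, and satisfy the
Jacobi-Trudi identity `h_d(u) = det(e_{1+j-i}(u))_{1 ≤ i,j ≤ d}`, the determinant being
expanded with the products taken in row order (i.e. `h_d(u) = Ψ(h_d(x))` where
`Ψ : Λ(x) → U/I_RKst` sends `e_k(x) ↦ e_k(u)`). -/
theorem hsym_mem_commute_jacobiTrudi (N : ℕ) :
    (∀ d : ℕ, pr N (hsym N d) ∈
      Algebra.adjoin ℤ (Set.range fun k : ℕ => pr N (esym N k))) ∧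
    (∀ d e : ℕ, pr N (hsym N d) * pr N (hsym N e) = pr N (hsym N e) * pr N (hsym N d)) ∧
    (∀ d : ℕ, pr N (hsym N d) =
      pr N (∑ σ : Equiv.Perm (Fin d), ((Equiv.Perm.sign σ : ℤˣ) : ℤ) •
        (List.ofFn fun i : Fin d =>
          esymZ N (1 + ((σ i : ℕ) : ℤ) - ((i : ℕ) : ℤ))).prod)) := by
  simp only [pr_esym, pr_hsym, pr_esymZ, map_sum, map_zsmul, map_list_prod, List.map_ofFn,
    Function.comp_def]
  exact hsym_mem_commute_jacobiTrudi_general (isRKFamily_pr_ι N) univ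

end
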